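/- Let n ≥ 1 and let u : ℝⁿ → ℝ be a smooth (C^∞) function. Define the operator A by (Au)(x) = ⟨x, ∇u(x)⟩ + (n/2)·u(x), where ∇u is the gradient of u. Then for every positive integer k and every x ∈ ℝⁿ, the commutator identity [Δ^k, A] = 2k·Δ^k holds pointwise: Δ^k(Au)(x) − A(Δ^k u)(x) = 2k·(Δ^k u)(x), where Δ^k denotes the k-fold iterate of the Laplacian. -/

import Mathlib

open scoped RealInnerProductSpace

/-- The Laplacian, as an operator on real-valued functions on `EuclideanSpace ℝ (Fin n)`:
the trace of the second Fréchet derivative. -/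
noncomputable def lapR (n : ℕ) (f : EuclideanSpace ℝ (Fin n) → ℝ) :
    EuclideanSpace ℝ (Fin n) → ℝ := fun x =>
  ∑ i : Fin n, fderiv ℝ (fderiv ℝ f) x (EuclideanSpace.single i 1) (EuclideanSpace.single i 1)

/-!
Write `A_c f (x) = Df(x) x + c f(x)`. Symmetry of second derivatives gives
`D (A_c f) = A_{c+1} (D f)`, where `D f` is a function with values in continuous linear maps; hence
`D² A_c = A_{c+2} D²`. Since `A_c` commutes with a fixed continuous linear map applied to the values
of `f`, taking traces gives `Δ A_c = A_{c+2} Δ`. Therefore `Δ^k A_c = A_{c+2k} Δ^k`, and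
`A_{c+2k} - A_c` is multiplication by `2k`.
-/

open scoped Topology

section DilationGenerator

variable {𝕜 E F G : Type*} [NontriviallyNormedField 𝕜]
  [NormedAddCommGroup E] [NormedSpace 𝕜 E] [NormedAddCommGroup F] [NormedSpace 𝕜 F]
  [NormedAddCommGroup G] [NormedSpace 𝕜 G] {f : E → F} {x : E}

/-- The first-order operator `x·∇ + c`, the generator of the one-parameter group of dilations
sending `f` to `x ↦ exp (c t) • f (exp t • x)`. The constant is a parameter, and `f` may be
vector-valued, so that the operator also acts on the derivatives of `f`. -/
noncomputable def dilationGenerator (c : 𝕜) (f : E → F) (x : E) : F :=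
  fderiv 𝕜 f x x + c • f x

theorem dilationGenerator_add_const (a b : 𝕜) (f : E → F) (x : E) :
    dilationGenerator (a + b) f x = dilationGenerator a f x + b • f x := by
  simp only [dilationGenerator, add_smul, add_assoc]

theorem dilationGenerator_clm_comp (c : 𝕜) (L : F →L[𝕜] G) (hf : DifferentiableAt 𝕜 f x) :
    dilationGenerator c (L ∘ f) x = L (dilationGenerator c f x) := by
  simp only [dilationGenerator, fderiv_comp x L.differentiableAt hf, L.fderiv,
    ContinuousLinearMap.comp_apply, Function.comp_apply, map_add, map_smul]

variable [IsRCLikeNormedField 𝕜]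

theorem fderiv_dilationGenerator (c : 𝕜) (hf : ContDiffAt 𝕜 2 f x) :
    fderiv 𝕜 (dilationGenerator c f) x = dilationGenerator (c + 1) (fderiv 𝕜 f) x := by
  have hf₁ : DifferentiableAt 𝕜 f x := hf.differentiableAt two_ne_zero
  have hf₂ : DifferentiableAt 𝕜 (fderiv 𝕜 f) x :=
    (hf.fderiv_right (m := 1) (by norm_num)).differentiableAt one_ne_zero
  have symm : IsSymmSndFDerivAt 𝕜 f x := hf.isSymmSndFDerivAt (by simp)
  have product_rule : HasFDerivAt (dilationGenerator c f) _ x :=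
    (hf₂.hasFDerivAt.clm_apply (hasFDerivAt_id x)).add (hf₁.hasFDerivAt.const_smul c)
  ext v
  calc fderiv 𝕜 (dilationGenerator c f) x v
      = fderiv 𝕜 f x v + fderiv 𝕜 (fderiv 𝕜 f) x v x + c • fderiv 𝕜 f x v := by
        simp [product_rule.fderiv]
    _ = fderiv 𝕜 (fderiv 𝕜 f) x x v + (c + 1) • fderiv 𝕜 f x v := by
        rw [symm.eq v x]
        module
    _ = dilationGenerator (c + 1) (fderiv 𝕜 f) x v := rfl

theorem fderiv_dilationGenerator_nhds (c : 𝕜) (hf : ContDiffAt 𝕜 2 f x) :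
    fderiv 𝕜 (dilationGenerator c f) =ᶠ[𝓝 x] dilationGenerator (c + 1) (fderiv 𝕜 f) :=
  (hf.eventually (by simp)).mono fun _ hy ↦ fderiv_dilationGenerator c hy

theorem fderiv_fderiv_dilationGenerator (c : 𝕜) (hf : ContDiffAt 𝕜 3 f x) :
    fderiv 𝕜 (fderiv 𝕜 (dilationGenerator c f)) x =
      dilationGenerator (c + 2) (fderiv 𝕜 (fderiv 𝕜 f)) x := by
  rw [(fderiv_dilationGenerator_nhds c (hf.of_le (by norm_num))).fderiv_eq,
    fderiv_dilationGenerator (c + 1) (hf.fderiv_right (by norm_num)), add_assoc, one_add_one_eq_two]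

end DilationGenerator

theorem dilationGenerator_eq_inner_gradient {E : Type*} [NormedAddCommGroup E]
    [InnerProductSpace ℝ E] [CompleteSpace E] (c : ℝ) (f : E → ℝ) (x : E) :
    dilationGenerator c f x = ⟪x, gradient f x⟫ + c * f x := by
  simp [dilationGenerator]

section Laplacian

open InnerProductSpace Laplacian

variable {E F : Type*} [NormedAddCommGroup E] [InnerProductSpace ℝ E] [FiniteDimensional ℝ E]
  [NormedAddCommGroup F] [NormedSpace ℝ F] {f : E → F} {x : E}

variable (E F) in
/-- The trace of a vector-valued bilinear map with respect to the inner product, as a continuous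
linear map. It expresses the Laplacian as a fixed linear map applied to the second derivative. -/
noncomputable def bilinearTrace : (E →L[ℝ] E →L[ℝ] F) →L[ℝ] F :=
  ∑ i, (ContinuousLinearMap.apply ℝ F (stdOrthonormalBasis ℝ E i)).comp
    (ContinuousLinearMap.apply ℝ (E →L[ℝ] F) (stdOrthonormalBasis ℝ E i))

theorem laplacian_eq_bilinearTrace_comp (f : E → F) :
    Δ f = bilinearTrace E F ∘ fderiv ℝ (fderiv ℝ f) := by
  ext x
  simp [laplacian_eq_iteratedFDeriv_stdOrthonormalBasis, iteratedFDeriv_two_apply, bilinearTrace]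

theorem contDiffAt_laplacian {m n : WithTop ℕ∞} (hf : ContDiffAt ℝ n f x) (hmn : m + 2 ≤ n) :
    ContDiffAt ℝ m (Δ f) x := by
  have hf₂ : ContDiffAt ℝ m (fderiv ℝ (fderiv ℝ f)) x :=
    (hf.fderiv_right (m := m + 1) (by rwa [add_assoc, one_add_one_eq_two])).fderiv_right le_rfl
  rw [laplacian_eq_bilinearTrace_comp]
  exact (bilinearTrace E F).contDiff.contDiffAt.comp x hf₂

theorem contDiffAt_laplacian_iterate {m n : WithTop ℕ∞} (k : ℕ) (hf : ContDiffAt ℝ n f x)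
    (hmn : m + 2 * k ≤ n) : ContDiffAt ℝ m (Δ^[k] f) x := by
  induction k generalizing m with
  | zero => exact hf.of_le (by simpa using hmn)
  | succ k ih =>
    rw [Function.iterate_succ_apply']
    refine contDiffAt_laplacian (ih (m := m + 2) ?_) le_rfl
    calc m + 2 + 2 * (k : WithTop ℕ∞) = m + 2 * (k + 1 : ℕ) := by push_cast; ring
      _ ≤ n := hmn

theorem laplacian_dilationGenerator (c : ℝ) (hf : ContDiffAt ℝ 3 f x) :
    Δ (dilationGenerator c f) x = dilationGenerator (c + 2) (Δ f) x := by
  have hf₂ : ContDiffAt ℝ 1 (fderiv ℝ (fderiv ℝ f)) x :=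
    (hf.fderiv_right (m := 2) (by norm_num)).fderiv_right (by norm_num)
  rw [laplacian_eq_bilinearTrace_comp, laplacian_eq_bilinearTrace_comp, Function.comp_apply,
    fderiv_fderiv_dilationGenerator c hf,
    dilationGenerator_clm_comp _ _ (hf₂.differentiableAt one_ne_zero)]

theorem laplacian_dilationGenerator_nhds (c : ℝ) (hf : ContDiffAt ℝ 3 f x) :
    Δ (dilationGenerator c f) =ᶠ[𝓝 x] dilationGenerator (c + 2) (Δ f) :=
  (hf.eventually (by simp)).mono fun _ hy ↦ laplacian_dilationGenerator c hy

theorem laplacian_iterate_dilationGenerator_nhds (c : ℝ) (k : ℕ)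
    (hf : ContDiffAt ℝ (2 * k + 1) f x) :
    Δ^[k] (dilationGenerator c f) =ᶠ[𝓝 x] dilationGenerator (c + 2 * k) (Δ^[k] f) := by
  induction k with
  | zero => simp
  | succ k ih =>
    have hf' : ContDiffAt ℝ (3 + 2 * k) f x := hf.of_le (by push_cast; ring_nf; rfl)
    have hΔf : ContDiffAt ℝ 3 (Δ^[k] f) x := contDiffAt_laplacian_iterate k hf' le_rfl
    have hc : c + 2 * k + 2 = c + 2 * (k + 1 : ℕ) := by push_cast; ring
    simp only [Function.iterate_succ_apply']
    calc Δ (Δ^[k] (dilationGenerator c f))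
        =ᶠ[𝓝 x] Δ (dilationGenerator (c + 2 * k) (Δ^[k] f)) :=
          laplacian_congr_nhds (ih (hf.of_le (by gcongr; simp)))
      _ =ᶠ[𝓝 x] dilationGenerator (c + 2 * (k + 1 : ℕ)) (Δ (Δ^[k] f)) :=
          hc ▸ laplacian_dilationGenerator_nhds (c + 2 * k) hΔf

theorem stmt2_general (c : ℝ) (k : ℕ) (hf : ContDiffAt ℝ (2 * k + 1) f x) :
    Δ^[k] (dilationGenerator c f) x - dilationGenerator c (Δ^[k] f) x =
      (2 * k : ℝ) • Δ^[k] f x := by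
  rw [(laplacian_iterate_dilationGenerator_nhds c k hf).eq_of_nhds, dilationGenerator_add_const,
    add_sub_cancel_left]

theorem lapR_eq_laplacian (n : ℕ) : lapR n = Δ := by
  ext f x
  simp [lapR, laplacian_eq_iteratedFDeriv_orthonormalBasis f (EuclideanSpace.basisFun (Fin n) ℝ),
    iteratedFDeriv_two_apply]

end Laplacian

/-- The commutator identity `[Δ^k, A] = 2k Δ^k` for the generator of dilations
`A = x·∇ + n/2`. -/
theorem stmt2 (n : ℕ) (hn : 1 ≤ n)
    (u : EuclideanSpace ℝ (Fin n) → ℝ) (hu : ContDiff ℝ (⊤ : ℕ∞) u)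
    (A : (EuclideanSpace ℝ (Fin n) → ℝ) → (EuclideanSpace ℝ (Fin n) → ℝ))
    (hA : ∀ v x, A v x = ⟪x, gradient v x⟫ + ((n : ℝ) / 2) * v x)
    (k : ℕ) (hk : 0 < k) (x : EuclideanSpace ℝ (Fin n)) :
    (lapR n)^[k] (A u) x - A ((lapR n)^[k] u) x = 2 * (k : ℝ) * (lapR n)^[k] u x := by
  obtain rfl : A = dilationGenerator ((n : ℝ) / 2) :=
    funext₂ fun v y ↦ by rw [hA, dilationGenerator_eq_inner_gradient]
  rw [lapR_eq_laplacian]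
  exact stmt2_general _ k (contDiff_infty.mp hu (2 * k + 1)).contDiffAt
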